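/- Let (x₁, x₂, x₃) be a triple of positive reals and let (x̄₁, x̄₂, x̄₃) be the unique triple of reals with v(x₁)·u(−x̄₃)·v(x₂)·u(−x̄₁)·v(x₃)·u(−x̄₂) = −I in SL(2,ℝ). Then the path β from I to −I in SL(2,ℝ) obtained by concatenating the six paths t ↦ v(t·x₁), t ↦ v(x₁)·u(−t·x̄₃), t ↦ v(x₁)·u(−x̄₃)·v(t·x₂), t ↦ v(x₁)·u(−x̄₃)·v(x₂)·u(−t·x̄₁), t ↦ v(x₁)·u(−x̄₃)·v(x₂)·u(−x̄₁)·v(t·x₃), and t ↦ v(x₁)·u(−x̄₃)·v(x₂)·u(−x̄₁)·v(x₃)·u(−t·x̄₂) (for t ∈ [0, 1]) is path-homotopic (relative to endpoints) to the path ω₋₁ : t ↦ [[cos(πt), −sin(πt)], [sin(πt), cos(πt)]]. (This is the case ε = −1 of the statement that the lift of β to the universal cover of PSL(2,ℝ) represents the class Φ(−(3+ε)/2).) -/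

import Mathlib

/- STATEMENT 9: For positive reals (x₁,x₂,x₃) and the (unique) real triple (b₁,b₂,b₃) with
v(x₁)·u(−b₃)·v(x₂)·u(−b₁)·v(x₃)·u(−b₂) = −I, the path β from I to −I in SL(2,ℝ) obtained
by concatenating the six factor paths is path-homotopic (rel endpoints) to
ω₋₁(t) = [[cos πt, −sin πt],[sin πt, cos πt]]. -/

noncomputable section

open Real

def u (x : ℝ) : Matrix.SpecialLinearGroup (Fin 2) ℝ :=
  ⟨!![1, x; 0, 1], by simp [Matrix.det_fin_two_of]⟩

def v (x : ℝ) : Matrix.SpecialLinearGroup (Fin 2) ℝ :=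
  ⟨!![1, 0; x, 1], by simp [Matrix.det_fin_two_of]⟩

/-- The rotation matrix `[[cos θ, sin θ], [−sin θ, cos θ]]` as an element of SL(2,ℝ);
note `rotSL (-θ) = [[cos θ, −sin θ], [sin θ, cos θ]]`. -/
def rotSL (θ : ℝ) : Matrix.SpecialLinearGroup (Fin 2) ℝ :=
  ⟨!![Real.cos θ, Real.sin θ; -Real.sin θ, Real.cos θ], by
    simp [Matrix.det_fin_two_of]; ring_nf; rw [add_comm]; exact Real.sin_sq_add_cos_sq θ⟩

/-- The element −I of SL(2,ℝ). -/
def negI : Matrix.SpecialLinearGroup (Fin 2) ℝ :=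
  ⟨!![-1, 0; 0, -1], by simp [Matrix.det_fin_two_of]⟩

/-- The standard topology on SL(2,ℝ), induced from the space of 2×2 real matrices. -/
instance : TopologicalSpace (Matrix.SpecialLinearGroup (Fin 2) ℝ) :=
  TopologicalSpace.induced (fun g => (g : Matrix (Fin 2) (Fin 2) ℝ)) inferInstance

/-- The element of `SL(2,ℝ)` with first column `(a, c)` whose second column has component `l`
along the first one. -/
def slOfColumn (a c l : ℝ) (h : a ^ 2 + c ^ 2 ≠ 0) : Matrix.SpecialLinearGroup (Fin 2) ℝ :=
  ⟨!![a, -c / (a ^ 2 + c ^ 2) + l * a; c, a / (a ^ 2 + c ^ 2) + l * c], by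
    rw [Matrix.det_fin_two_of]; field_simp; ring⟩

/-- The component of the second column of `g` along the first one. -/
def shear (g : Matrix.SpecialLinearGroup (Fin 2) ℝ) : ℝ :=
  (g 0 0 * g 0 1 + g 1 0 * g 1 1) / (g 0 0 ^ 2 + g 1 0 ^ 2)

theorem first_column_ne_zero (g : Matrix.SpecialLinearGroup (Fin 2) ℝ) :
    g 0 0 ^ 2 + g 1 0 ^ 2 ≠ 0 := by
  intro h
  have hdet := g.det_coe
  rw [Matrix.det_fin_two] at hdet
  have h0 : g 0 0 = 0 := by nlinarith [sq_nonneg (g 0 0), sq_nonneg (g 1 0)]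
  have h1 : g 1 0 = 0 := by nlinarith [sq_nonneg (g 0 0), sq_nonneg (g 1 0)]
  simp [h0, h1] at hdet

theorem slOfColumn_eq (g : Matrix.SpecialLinearGroup (Fin 2) ℝ) {a c l : ℝ}
    (h : a ^ 2 + c ^ 2 ≠ 0) (ha : a = g 0 0) (hc : c = g 1 0) (hl : l = shear g) :
    slOfColumn a c l h = g := by
  subst ha hc hl
  have hdet := g.det_coe
  rw [Matrix.det_fin_two] at hdet
  ext i j
  fin_cases i <;> fin_cases j
  · rfl
  · change -g 1 0 / (g 0 0 ^ 2 + g 1 0 ^ 2) + shear g * g 0 0 = g 0 1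
    unfold shear
    field_simp
    linear_combination g 1 0 * hdet
  · rfl
  · change g 0 0 / (g 0 0 ^ 2 + g 1 0 ^ 2) + shear g * g 1 0 = g 1 1
    unfold shear
    field_simp
    linear_combination -g 0 0 * hdet

theorem continuous_entry (i j : Fin 2) :
    Continuous fun g : Matrix.SpecialLinearGroup (Fin 2) ℝ => g i j :=
  Continuous.matrix_elem continuous_induced_dom i j

theorem continuous_shear : Continuous shear := by
  have h := continuous_entry
  exact (((h 0 0).mul (h 0 1)).add ((h 1 0).mul (h 1 1))).div
    (((h 0 0).pow 2).add ((h 1 0).pow 2)) first_column_ne_zero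

/-- Two paths in `SL(2,ℝ)` are homotopic as soon as the straight-line homotopy between their
first columns avoids the origin. -/
theorem homotopic_of_first_column {g₀ g₁ : Matrix.SpecialLinearGroup (Fin 2) ℝ}
    (γ δ : Path g₀ g₁)
    (h : ∀ s t : unitInterval, ((1 - s) * γ t 0 0 + s * δ t 0 0 : ℝ) ^ 2 +
      ((1 - s) * γ t 1 0 + s * δ t 1 0 : ℝ) ^ 2 ≠ 0) :
    γ.Homotopic δ := by
  refine ⟨{
    toFun := fun p => slOfColumn ((1 - p.1) * γ p.2 0 0 + p.1 * δ p.2 0 0)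
      ((1 - p.1) * γ p.2 1 0 + p.1 * δ p.2 1 0)
      ((1 - p.1) * shear (γ p.2) + p.1 * shear (δ p.2)) (h p.1 p.2)
    continuous_toFun := ?_
    map_zero_left := fun t => slOfColumn_eq _ _ (by simp) (by simp) (by simp)
    map_one_left := fun t => slOfColumn_eq _ _ (by simp) (by simp) (by simp)
    prop' := ?_ }⟩
  · have hs : Continuous fun p : unitInterval × unitInterval => (p.1 : ℝ) := by fun_prop
    have hγ : Continuous fun p : unitInterval × unitInterval => γ p.2 := by fun_prop
    have hδ : Continuous fun p : unitInterval × unitInterval => δ p.2 := by fun_prop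
    have hc : ∀ f : Matrix.SpecialLinearGroup (Fin 2) ℝ → ℝ, Continuous f →
        Continuous fun p : unitInterval × unitInterval =>
          (1 - p.1) * f (γ p.2) + p.1 * f (δ p.2) := fun f hf =>
      ((continuous_const.sub hs).mul (hf.comp hγ)).add (hs.mul (hf.comp hδ))
    have h₀ := hc _ (continuous_entry 0 0)
    have h₁ := hc _ (continuous_entry 1 0)
    have hl := hc _ continuous_shear
    have hN := (h₀.pow 2).add (h₁.pow 2)
    refine continuous_induced_rng.2 (continuous_matrix fun i j => ?_)
    fin_cases i <;> fin_cases j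
    · exact h₀
    · exact (h₁.neg.div hN fun p => h p.1 p.2).add (hl.mul h₀)
    · exact h₁
    · exact (h₀.div hN fun p => h p.1 p.2).add (hl.mul h₁)
  · intro s t ht
    have hγδ : δ t = γ t := by
      rcases ht with rfl | rfl <;> simp
    refine slOfColumn_eq _ (h s t) ?_ ?_ ?_ <;> simp only [hγδ, Path.coe_toContinuousMap] <;> ring

theorem mul_u_one_zero (g : Matrix.SpecialLinearGroup (Fin 2) ℝ) (x : ℝ) :
    (g * u x) 1 0 = g 1 0 := by
  rw [Matrix.SpecialLinearGroup.coe_mul]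
  simp [u, Matrix.mul_apply]

theorem mul_u_one_one (g : Matrix.SpecialLinearGroup (Fin 2) ℝ) (x : ℝ) :
    (g * u x) 1 1 = g 1 0 * x + g 1 1 := by
  rw [Matrix.SpecialLinearGroup.coe_mul]
  simp [u, Matrix.mul_apply]

theorem mul_v_one_zero (g : Matrix.SpecialLinearGroup (Fin 2) ℝ) (x : ℝ) :
    (g * v x) 1 0 = g 1 0 + g 1 1 * x := by
  rw [Matrix.SpecialLinearGroup.coe_mul]
  simp [v, Matrix.mul_apply]

theorem mul_v_one_one (g : Matrix.SpecialLinearGroup (Fin 2) ℝ) (x : ℝ) :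
    (g * v x) 1 1 = g 1 1 := by
  rw [Matrix.SpecialLinearGroup.coe_mul]
  simp [v, Matrix.mul_apply]

/-- A path from `I` to `−I` in `SL(2,ℝ)` whose first column stays in the closed upper half-plane
is homotopic to the half-turn. -/
theorem homotopic_rot_of_lower_left_nonneg
    (γ ω : Path (1 : Matrix.SpecialLinearGroup (Fin 2) ℝ) negI)
    (hγ : ∀ t, 0 ≤ γ t 1 0) (hω : ∀ t : unitInterval, ω t = rotSL (-(π * t))) :
    γ.Homotopic ω := by
  refine homotopic_of_first_column γ ω fun s t => ?_
  by_cases ht : γ t = ω t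
  · have h := first_column_ne_zero (ω t)
    rw [ht]
    convert h using 3 <;> ring
  have ht0 : t ≠ 0 := by rintro rfl; simp at ht
  have ht1 : t ≠ 1 := by rintro rfl; simp at ht
  have hpos : 0 < ω t 1 0 := by
    have hlt : (t : ℝ) < 1 := unitInterval.lt_one_iff_ne_one.2 ht1
    have hgt : (0 : ℝ) < t := unitInterval.pos_iff_ne_zero.2 ht0
    have hsin : ω t 1 0 = Real.sin (π * t) := by simp [hω, rotSL]
    rw [hsin]
    exact Real.sin_pos_of_pos_of_lt_pi (by positivity) (by nlinarith [Real.pi_pos])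
  by_cases hs : s = 0
  · subst hs
    simpa using first_column_ne_zero (γ t)
  · have hs0 : (0 : ℝ) < s := unitInterval.pos_iff_ne_zero.2 hs
    have hnn := mul_nonneg (sub_nonneg.2 s.2.2) (hγ t)
    have : (0 : ℝ) < (1 - s) * γ t 1 0 + s * ω t 1 0 := by
      linarith [mul_pos hs0 hpos]
    positivity

theorem lower_left_trans_nonneg {g₀ g₁ g₂ : Matrix.SpecialLinearGroup (Fin 2) ℝ}
    {p : Path g₀ g₁} {q : Path g₁ g₂} (hp : ∀ t, 0 ≤ p t 1 0) (hq : ∀ t, 0 ≤ q t 1 0)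
    (t : unitInterval) : 0 ≤ p.trans q t 1 0 := by
  rw [Path.trans_apply]
  split_ifs
  · exact hp _
  · exact hq _

theorem hexagon_path_eps_neg_one_homotopic (x₁ x₂ x₃ b₁ b₂ b₃ : ℝ)
    (hx₁ : 0 < x₁) (hx₂ : 0 < x₂) (hx₃ : 0 < x₃)
    (heq : v x₁ * u (-b₃) * v x₂ * u (-b₁) * v x₃ * u (-b₂) = negI)
    (p₁ : Path (1 : Matrix.SpecialLinearGroup (Fin 2) ℝ) (v x₁))
    (p₂ : Path (v x₁) (v x₁ * u (-b₃)))
    (p₃ : Path (v x₁ * u (-b₃)) (v x₁ * u (-b₃) * v x₂))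
    (p₄ : Path (v x₁ * u (-b₃) * v x₂) (v x₁ * u (-b₃) * v x₂ * u (-b₁)))
    (p₅ : Path (v x₁ * u (-b₃) * v x₂ * u (-b₁))
      (v x₁ * u (-b₃) * v x₂ * u (-b₁) * v x₃))
    (p₆ : Path (v x₁ * u (-b₃) * v x₂ * u (-b₁) * v x₃) negI)
    (hp₁ : ∀ t : unitInterval, p₁ t = v (t * x₁))
    (hp₂ : ∀ t : unitInterval, p₂ t = v x₁ * u (-(t * b₃)))
    (hp₃ : ∀ t : unitInterval, p₃ t = v x₁ * u (-b₃) * v (t * x₂))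
    (hp₄ : ∀ t : unitInterval, p₄ t = v x₁ * u (-b₃) * v x₂ * u (-(t * b₁)))
    (hp₅ : ∀ t : unitInterval, p₅ t = v x₁ * u (-b₃) * v x₂ * u (-b₁) * v (t * x₃))
    (hp₆ : ∀ t : unitInterval,
      p₆ t = v x₁ * u (-b₃) * v x₂ * u (-b₁) * v x₃ * u (-(t * b₂)))
    (ω : Path (1 : Matrix.SpecialLinearGroup (Fin 2) ℝ) negI)
    (hω : ∀ t : unitInterval, ω t = rotSL (-(π * t))) :
    (((((p₁.trans p₂).trans p₃).trans p₄).trans p₅).trans p₆).Homotopic ω := by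
  have hv₀ : v x₁ 1 0 = x₁ := rfl
  have h₁₀ := congrArg (fun g : Matrix.SpecialLinearGroup (Fin 2) ℝ => g 1 0) heq
  have h₁₁ := congrArg (fun g : Matrix.SpecialLinearGroup (Fin 2) ℝ => g 1 1) heq
  have hn₀ : negI 1 0 = 0 := rfl
  have hn₁ : negI 1 1 = -1 := rfl
  simp only [mul_u_one_one, mul_u_one_zero (_ * v x₃), hn₀, hn₁] at h₁₀ h₁₁
  rw [h₁₀, zero_mul, zero_add, mul_v_one_one] at h₁₁
  rw [mul_v_one_zero, h₁₁, mul_u_one_zero] at h₁₀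
  have hQ : (v x₁ * u (-b₃)) 1 1 * x₂ = x₃ - x₁ := by
    rw [mul_v_one_zero, mul_u_one_zero, hv₀] at h₁₀
    linarith
  refine homotopic_rot_of_lower_left_nonneg _ ω ?_ hω
  refine lower_left_trans_nonneg (lower_left_trans_nonneg (lower_left_trans_nonneg
    (lower_left_trans_nonneg (lower_left_trans_nonneg ?_ ?_) ?_) ?_) ?_) ?_ <;> intro t
  · rw [hp₁]
    exact mul_nonneg t.2.1 hx₁.le
  · rw [hp₂, mul_u_one_zero, hv₀]
    exact hx₁.le
  · rw [hp₃, mul_v_one_zero, mul_u_one_zero, hv₀]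
    nlinarith [mul_nonneg (sub_nonneg.2 t.2.2) hx₁.le, mul_nonneg t.2.1 hx₃.le]
  · rw [hp₄, mul_u_one_zero]
    linarith
  · rw [hp₅, mul_v_one_zero, h₁₁, mul_u_one_zero]
    nlinarith [mul_nonneg (sub_nonneg.2 t.2.2) hx₃.le]
  · rw [hp₆, mul_u_one_zero, mul_v_one_zero, h₁₁, mul_u_one_zero]
    linarith
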